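/- arXiv:2102.02921 — 10 statements merged into one kernel-verified Lean document; each statement's English description precedes it below -/
import Mathlib

section
/- For all x, y ∈ Q it holds that f(y) ≤ f(x) + ⟨g̃(x), y − x⟩ + (L/2)‖y − x‖₂² + δ₂, where L = 2L_f and δ₂ = δ²/(2L_f). -/
open scoped RealInnerProductSpace

/-- Claim 4.1: inexact upper quadratic bound with `L = 2 L_f` and `δ₂ = δ² / (2 L_f)`. -/
theorem stmt_0 {n : ℕ} (Q : Set (EuclideanSpace ℝ (Fin n)))
    (hQclosed : IsClosed Q) (hQconvex : Convex ℝ Q)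
    (f : EuclideanSpace ℝ (Fin n) → ℝ)
    (f' gt : EuclideanSpace ℝ (Fin n) → EuclideanSpace ℝ (Fin n))
    (Lf δ : ℝ) (hLf : 0 < Lf) (hδ : 0 ≤ δ)
    (hgrad : ∀ x ∈ Q, HasGradientAt f (f' x) x)
    (hsmooth : ∀ x ∈ Q, ∀ y ∈ Q, ‖f' x - f' y‖ ≤ Lf * ‖x - y‖)
    (hupper : ∀ x ∈ Q, ∀ y ∈ Q,
      f y ≤ f x + ⟪f' x, y - x⟫ + Lf / 2 * ‖x - y‖ ^ 2)
    (horacle : ∀ x ∈ Q, ‖gt x - f' x‖ ≤ δ) :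
    ∀ x ∈ Q, ∀ y ∈ Q,
      f y ≤ f x + ⟪gt x, y - x⟫ + 2 * Lf / 2 * ‖y - x‖ ^ 2 + δ ^ 2 / (2 * Lf) := by
  intro x hx y hy
  have hinner : ⟪f' x - gt x, y - x⟫ ≤ δ * ‖y - x‖ :=
    (real_inner_le_norm _ _).trans <| by
      rw [norm_sub_rev (f' x)]
      exact mul_le_mul_of_nonneg_right (horacle x hx) (norm_nonneg _)
  have hyoung : δ * ‖y - x‖ ≤ Lf / 2 * ‖y - x‖ ^ 2 + δ ^ 2 / (2 * Lf) := by
    have hsq : Lf / 2 * ‖y - x‖ ^ 2 + δ ^ 2 / (2 * Lf) - δ * ‖y - x‖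
        = (Lf * ‖y - x‖ - δ) ^ 2 / (2 * Lf) := by
      field_simp
      ring
    have hnonneg : 0 ≤ (Lf * ‖y - x‖ - δ) ^ 2 / (2 * Lf) := by positivity
    linarith
  have hdescent := hupper x hx y hy
  rw [norm_sub_rev x y] at hdescent
  rw [inner_sub_left] at hinner
  linarith
end

section
/- For all x, y ∈ Q it holds that f(x) + ⟨g̃(x), y − x⟩ + (μ/4)‖y − x‖₂² − δ₃ ≤ f(y), where δ₃ = δ²/μ. -/
open scoped RealInnerProductSpace

/-- Claim 4.3: inexact strong-convexity lower bound with `δ₃ = δ² / μ`, `μ > 0`. -/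
theorem stmt_2 {n : ℕ} (Q : Set (EuclideanSpace ℝ (Fin n)))
    (hQclosed : IsClosed Q) (hQconvex : Convex ℝ Q)
    (f : EuclideanSpace ℝ (Fin n) → ℝ)
    (f' gt : EuclideanSpace ℝ (Fin n) → EuclideanSpace ℝ (Fin n))
    (μ δ : ℝ) (hμ : 0 < μ) (hδ : 0 ≤ δ)
    (hgrad : ∀ x ∈ Q, HasGradientAt f (f' x) x)
    (hsc : ∀ x ∈ Q, ∀ y ∈ Q,
      f x + ⟪f' x, y - x⟫ + μ / 2 * ‖x - y‖ ^ 2 ≤ f y)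
    (horacle : ∀ x ∈ Q, ‖gt x - f' x‖ ≤ δ) :
    ∀ x ∈ Q, ∀ y ∈ Q,
      f x + ⟪gt x, y - x⟫ + μ / 4 * ‖y - x‖ ^ 2 - δ ^ 2 / μ ≤ f y := by
  intro x hx y hy
  have hstrong := hsc x hx y hy
  rw [norm_sub_rev x y] at hstrong
  have hinner : ⟪gt x, y - x⟫ - ⟪f' x, y - x⟫ ≤ δ * ‖y - x‖ := by
    rw [← inner_sub_left]
    exact (real_inner_le_norm _ _).trans
      (mul_le_mul_of_nonneg_right (horacle x hx) (norm_nonneg _))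
  have hyoung : δ * ‖y - x‖ ≤ δ ^ 2 / μ + μ / 4 * ‖y - x‖ ^ 2 := by
    have hsq : δ ^ 2 / μ + μ / 4 * ‖y - x‖ ^ 2 - δ * ‖y - x‖
        = (δ - μ / 2 * ‖y - x‖) ^ 2 / μ := by
      field_simp
      ring
    have hnonneg : 0 ≤ (δ - μ / 2 * ‖y - x‖) ^ 2 / μ := by positivity
    linarith
  linarith
end

section
/- For every k ≥ 1, the estimating functions of STM satisfy ψ_k(z_k) ≥ ψ_{k−1}(z_{k−1}) + ((1 + μ_τ A_{k−1})/2)‖z_k − z_{k−1}‖₂² + α_k (f(x̃_k) + ⟨g̃(x̃_k), z_k − x̃_k⟩ + (μ_τ/2)‖z_k − x̃_k‖₂²). -/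
open scoped RealInnerProductSpace

section StrongConvexity

variable {E : Type*} [NormedAddCommGroup E] [InnerProductSpace ℝ E] {s : Set E}

/-- A quadratic function with Hessian `m • id` is `m`-strongly convex. -/
lemma strongConvexOn_quadratic (hs : Convex ℝ s) (c m : ℝ) (g p : E) :
    StrongConvexOn s m (fun y => c + ⟪g, y - p⟫ + m / 2 * ‖y - p‖ ^ 2) := by
  rw [strongConvexOn_iff_convex]
  refine ⟨hs, fun u _ v _ a b _ _ hab => le_of_eq ?_⟩
  obtain rfl : a = 1 - b := by linarith
  simp only [norm_sub_sq_real, inner_sub_right, inner_add_left, inner_add_right,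
    real_inner_smul_left, real_inner_smul_right, smul_eq_mul]
  ring

/-- A strongly convex function grows quadratically away from a minimizer. -/
lemma StrongConvexOn.add_sq_norm_sub_le_of_isMinOn {m : ℝ} {φ : E → ℝ} {z y : E}
    (hφ : StrongConvexOn s m φ) (hmin : IsMinOn φ s z) (hz : z ∈ s) (hy : y ∈ s) :
    φ z + m / 2 * ‖y - z‖ ^ 2 ≤ φ y := by
  have key : ∀ t ∈ Set.Ioo (0 : ℝ) 1, φ z + (1 - t) * (m / 2 * ‖y - z‖ ^ 2) ≤ φ y := by
    rintro t ⟨ht0, ht1⟩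
    have hc := hφ.2 hy hz ht0.le (sub_nonneg.2 ht1.le) (by ring)
    have hm := isMinOn_iff.1 hmin _
      (hφ.1 hy hz ht0.le (sub_nonneg.2 ht1.le) (by ring))
    simp only [smul_eq_mul] at hc
    refine le_of_mul_le_mul_left ?_ ht0
    linarith
  have hlim : Filter.Tendsto (fun t : ℝ => φ z + (1 - t) * (m / 2 * ‖y - z‖ ^ 2))
      (nhdsWithin 0 (Set.Ioi 0)) (nhds (φ z + m / 2 * ‖y - z‖ ^ 2)) := by
    have hcont : Continuous (fun t : ℝ => φ z + (1 - t) * (m / 2 * ‖y - z‖ ^ 2)) := by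
      fun_prop
    simpa using (hcont.tendsto 0).mono_left nhdsWithin_le_nhds
  refine le_of_tendsto hlim ?_
  filter_upwards [Ioo_mem_nhdsGT (zero_lt_one (α := ℝ))] with t ht using key t ht

/-- Adding a quadratic function with Hessian `(a * μ) • id` raises the modulus of strong convexity
by `μ * a`. -/
lemma StrongConvexOn.add_quadratic {m : ℝ} {φ : E → ℝ} (hφ : StrongConvexOn s m φ)
    (a c μ : ℝ) (g p : E) :
    StrongConvexOn s (m + μ * a)
      (fun y => φ y + a * (c + ⟪g, y - p⟫ + μ / 2 * ‖y - p‖ ^ 2)) := by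
  have h := UniformConvexOn.add hφ (strongConvexOn_quadratic hφ.1 (a * c) (μ * a) (a • g) p)
  unfold StrongConvexOn
  convert h using 1
  · ext r
    simp only [Pi.add_apply]
    ring
  · ext y
    simp only [Pi.add_apply, real_inner_smul_left]
    ring

end StrongConvexity

/-- Lemma 4.2: key inequality for the STM estimating functions. -/
theorem stmt_3 {n : ℕ} (Q : Set (EuclideanSpace ℝ (Fin n)))
    (hQclosed : IsClosed Q) (hQconvex : Convex ℝ Q)
    (f : EuclideanSpace ℝ (Fin n) → ℝ)
    (gt : EuclideanSpace ℝ (Fin n) → EuclideanSpace ℝ (Fin n))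
    (μτ L : ℝ) (hμτ : 0 ≤ μτ) (hL : 0 < L)
    (α A : ℕ → ℝ) (xt x z : ℕ → EuclideanSpace ℝ (Fin n))
    (ψ : ℕ → EuclideanSpace ℝ (Fin n) → ℝ)
    (hxt0 : xt 0 ∈ Q) (hα0 : α 0 = 1 / L) (hA0 : A 0 = 1 / L)
    (hψ0 : ∀ y, ψ 0 y = 1 / 2 * ‖y - xt 0‖ ^ 2 +
      α 0 * (f (xt 0) + ⟪gt (xt 0), y - xt 0⟫ + μτ / 2 * ‖y - xt 0‖ ^ 2))
    (hzmem : ∀ k, z k ∈ Q) (hzmin : ∀ k, ∀ y ∈ Q, ψ k (z k) ≤ ψ k y)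
    (hx0 : x 0 = z 0)
    (hαpos : ∀ k, 0 < α (k + 1))
    (hαeq : ∀ k, (1 + μτ * A k) * (A k + α (k + 1)) = L * α (k + 1) ^ 2)
    (hA : ∀ k, A (k + 1) = A k + α (k + 1))
    (hxt : ∀ k, xt (k + 1) = (A (k + 1))⁻¹ • (A k • x k + α (k + 1) • z k))
    (hψ : ∀ k y, ψ (k + 1) y = ψ k y + α (k + 1) *
      (f (xt (k + 1)) + ⟪gt (xt (k + 1)), y - xt (k + 1)⟫ +
        μτ / 2 * ‖y - xt (k + 1)‖ ^ 2))
    (hx : ∀ k, x (k + 1) = (A (k + 1))⁻¹ • (A k • x k + α (k + 1) • z (k + 1))) :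
    ∀ k : ℕ,
      ψ k (z k) + (1 + μτ * A k) / 2 * ‖z (k + 1) - z k‖ ^ 2 +
        α (k + 1) * (f (xt (k + 1)) + ⟪gt (xt (k + 1)), z (k + 1) - xt (k + 1)⟫ +
          μτ / 2 * ‖z (k + 1) - xt (k + 1)‖ ^ 2) ≤ ψ (k + 1) (z (k + 1)) := by
  have hsc : ∀ k, StrongConvexOn Q (1 + μτ * A k) (ψ k) := by
    intro k
    induction k with
    | zero =>
      have h := (strongConvexOn_quadratic hQconvex 0 1 0 (xt 0)).add_quadratic
        (α 0) (f (xt 0)) μτ (gt (xt 0)) (xt 0)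
      rw [hA0, ← hα0, funext hψ0]
      simpa using h
    | succ k ih =>
      have h := ih.add_quadratic (α (k + 1)) (f (xt (k + 1))) μτ (gt (xt (k + 1))) (xt (k + 1))
      rw [hA, funext (hψ k), mul_add, ← add_assoc]
      exact h
  intro k
  rw [hψ k (z (k + 1))]
  gcongr
  exact (hsc k).add_sq_norm_sub_le_of_isMinOn (isMinOn_iff.2 (hzmin k)) (hzmem k) (hzmem (k + 1))
end

section
/- If μ_τ > 0, then for all k ≥ 1 the STM coefficients satisfy A_k ≥ A_{k−1} λ, where θ = μ_τ/L and λ = 1 + θ/2 + √θ. -/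
/-- A positive `a` with `(1 + L s² x) (x + a) = L a²` is at least `x (s² / 2 + s)`. -/
theorem mul_half_sq_add_self_le_of_step_eq {L s x a : ℝ} (hL : 0 < L) (hx : 0 < x)
    (ha : 0 < a) (h : (1 + L * s ^ 2 * x) * (x + a) = L * a ^ 2) :
    x * (s ^ 2 / 2 + s) ≤ a := by
  have hsq : s ^ 2 * x * (x + a) ≤ a ^ 2 :=
    le_of_mul_le_mul_left (by linarith) hL
  have hlow : s ^ 2 * x ≤ a := by
    refine le_of_mul_le_mul_right ?_ ha
    nlinarith [mul_nonneg (sq_nonneg s) (sq_nonneg x)]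
  have hroot : s * x ≤ a - s ^ 2 * x / 2 := by
    refine (le_abs_self _).trans (abs_le_of_sq_le_sq ?_ ?_)
    · nlinarith [sq_nonneg (s ^ 2 * x)]
    · nlinarith [mul_nonneg (sq_nonneg s) hx.le]
  linarith

/-- Claim 4.4: growth of the STM coefficients `A_k` when `μ_τ > 0`. -/
theorem stmt_4 (L μτ : ℝ) (hL : 0 < L) (hμτ : 0 < μτ)
    (α A : ℕ → ℝ) (hα0 : α 0 = 1 / L) (hA0 : A 0 = 1 / L)
    (hαpos : ∀ k, 0 < α (k + 1))
    (hαeq : ∀ k, (1 + μτ * A k) * (A k + α (k + 1)) = L * α (k + 1) ^ 2)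
    (hA : ∀ k, A (k + 1) = A k + α (k + 1)) :
    ∀ k : ℕ, A k * (1 + (μτ / L) / 2 + Real.sqrt (μτ / L)) ≤ A (k + 1) := by
  intro k
  have hApos : 0 < A k := by
    induction k with
    | zero => rw [hA0]; positivity
    | succ k ih => rw [hA]; exact add_pos ih (hαpos k)
  have hs : Real.sqrt (μτ / L) ^ 2 = μτ / L := Real.sq_sqrt (by positivity)
  have hstep := mul_half_sq_add_self_le_of_step_eq (s := Real.sqrt (μτ / L)) hL hApos (hαpos k)
    (by rw [hs, mul_div_cancel₀ _ hL.ne']; exact hαeq k)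
  rw [hs] at hstep
  rw [hA]
  linarith
end

section
/- If μ_τ > 0, then for all k ≥ 1 the STM coefficients satisfy (1/A_k) Σ_{j=0}^{k} A_j ≤ 1 + √(L/μ_τ). -/
/-- Claim 4.5: `(1/A_k) ∑_{j=0}^k A_j ≤ 1 + √(L/μ_τ)` when `μ_τ > 0`. -/
theorem stmt_6 (L μτ : ℝ) (hL : 0 < L) (hμτ : 0 < μτ) (hμτL : μτ ≤ L)
    (α A : ℕ → ℝ) (hα0 : α 0 = 1 / L) (hA0 : A 0 = 1 / L)
    (hαpos : ∀ k, 0 < α (k + 1))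
    (hαeq : ∀ k, (1 + μτ * A k) * (A k + α (k + 1)) = L * α (k + 1) ^ 2)
    (hA : ∀ k, A (k + 1) = A k + α (k + 1)) :
    ∀ k : ℕ, 1 ≤ k →
      (1 / A k) * ∑ j ∈ Finset.range (k + 1), A j ≤ 1 + Real.sqrt (L / μτ) := by
  have hApos : ∀ k, 0 < A k := by
    intro k
    induction k with
    | zero => rw [hA0]; positivity
    | succ k ih => rw [hA]; linarith [hαpos k]
  have hstep : ∀ k, A k ≤ Real.sqrt (L / μτ) * α (k + 1) := by
    intro k
    have hα := hαpos k
    have hAk := hApos k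
    refine (sq_le_sq₀ hAk.le (by positivity)).1 ?_
    rw [mul_pow, Real.sq_sqrt (by positivity), div_mul_eq_mul_div, ← hαeq k, le_div_iff₀ hμτ]
    have : 0 < μτ * A k * α (k + 1) := by positivity
    nlinarith
  have hsum : ∀ k, ∑ j ∈ Finset.range (k + 1), A j ≤ (1 + Real.sqrt (L / μτ)) * A k := by
    intro k
    induction k with
    | zero =>
      have : 0 ≤ Real.sqrt (L / μτ) * A 0 := mul_nonneg (Real.sqrt_nonneg _) (hApos 0).le
      simp only [zero_add, Finset.sum_range_one]
      linarith
    | succ k ih =>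
      rw [Finset.sum_range_succ, hA k]
      linarith [hstep k]
  intro k _
  rw [one_div_mul_eq_div, div_le_iff₀ (hApos k)]
  exact hsum k
end

section
/- If μ_τ = 0, then for all k ≥ 1 the STM coefficients satisfy A_k ≥ (k+1)²/(4L). -/
/-- Positive solutions of `y² - y = x²` exceed `x` by at least `1/2`. -/
lemma add_half_le_of_sq_add_eq_sq {x y : ℝ} (hy : 0 < y) (h : x ^ 2 + y = y ^ 2) :
    x + 1 / 2 ≤ y := by
  have hy1 : 1 ≤ y := by nlinarith [sq_nonneg x]
  have : x ≤ y - 1 / 2 := abs_le_of_sq_le_sq' (by nlinarith) (by linarith) |>.2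
  linarith

/-- Claim 4.6: if `μ_τ = 0` then `A_k ≥ (k+1)²/(4L)` for `k ≥ 1`. -/
theorem stmt_7 (L : ℝ) (hL : 0 < L)
    (α A : ℕ → ℝ) (hα0 : α 0 = 1 / L) (hA0 : A 0 = 1 / L)
    (hαpos : ∀ k, 0 < α (k + 1))
    (hαeq : ∀ k, A k + α (k + 1) = L * α (k + 1) ^ 2)
    (hA : ∀ k, A (k + 1) = A k + α (k + 1)) :
    ∀ k : ℕ, 1 ≤ k → ((k : ℝ) + 1) ^ 2 / (4 * L) ≤ A k := by
  have hAα : ∀ k, A k = L * α k ^ 2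
    | 0 => by rw [hA0, hα0]; field_simp
    | k + 1 => (hA k).trans (hαeq k)
  have hgrowth : ∀ k : ℕ, ((k : ℝ) + 1) / 2 ≤ L * α k := by
    intro k
    induction k with
    | zero => rw [hα0, mul_one_div_cancel hL.ne']; norm_num
    | succ k ih =>
      have hstep : L * α k + 1 / 2 ≤ L * α (k + 1) := by
        refine add_half_le_of_sq_add_eq_sq (mul_pos hL (hαpos k)) ?_
        linear_combination L * hαeq k - L * hAα k
      push_cast
      linarith
  intro k _
  rw [hAα k, div_le_iff₀ (by positivity)]
  have hk : (0 : ℝ) ≤ ((k : ℝ) + 1) / 2 := by positivity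
  linarith [pow_le_pow_left₀ hk (hgrowth k) 2]
end

section
/- For all k ≥ 0, the STM iterates with μ_τ = μ (τ = 1) satisfy A_k f(x_k) ≤ ψ_k(z_k) + δ₂ Σ_{j=0}^{k} A_j + δ₁ Σ_{j=1}^{k} α_j ‖x̃_j − z_{j−1}‖₂, where δ₁ = δ and δ₂ = δ²/(2L_f). -/
open scoped RealInnerProductSpace

section Helpers

variable {E : Type*} [NormedAddCommGroup E] [InnerProductSpace ℝ E]

/-- The descent lemma on a convex set: a function with `L`-Lipschitz gradient is bounded above by
its quadratic model. -/
theorem le_quadratic_model_of_lipschitz_gradient [CompleteSpace E] {Q : Set E}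
    (hQ : Convex ℝ Q) {f : E → ℝ} {f' : E → E} {L : ℝ}
    (hgrad : ∀ v ∈ Q, HasGradientAt f (f' v) v)
    (hsmooth : ∀ v ∈ Q, ∀ w ∈ Q, ‖f' v - f' w‖ ≤ L * ‖v - w‖)
    {v w : E} (hv : v ∈ Q) (hw : w ∈ Q) :
    f w ≤ f v + ⟪f' v, w - v⟫ + L / 2 * ‖w - v‖ ^ 2 := by
  set d := w - v with hd
  have hmem : ∀ t ∈ Set.Icc (0 : ℝ) 1, v + t • d ∈ Q := fun t ht =>
    hQ.add_smul_sub_mem hv hw ht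
  have hderiv : ∀ t ∈ Set.Icc (0 : ℝ) 1, HasDerivAt
      (fun s : ℝ => f (v + s • d) - (s * ⟪f' v, d⟫ + L / 2 * ‖d‖ ^ 2 * s ^ 2))
      (⟪f' (v + t • d), d⟫ - (⟪f' v, d⟫ + L * ‖d‖ ^ 2 * t)) t := by
    intro t ht
    have hline : HasDerivAt (fun s : ℝ => v + s • d) d t := by
      simpa using ((hasDerivAt_id t).smul_const d).const_add v
    have hf := (hgrad _ (hmem t ht)).hasFDerivAt.comp_hasDerivAt t hline
    rw [InnerProductSpace.toDual_apply_apply] at hf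
    refine hf.sub (HasDerivAt.congr_deriv (((hasDerivAt_id t).mul_const _).add
      ((hasDerivAt_pow 2 t).const_mul (L / 2 * ‖d‖ ^ 2))) ?_)
    simp
    ring
  have hanti : AntitoneOn
      (fun s : ℝ => f (v + s • d) - (s * ⟪f' v, d⟫ + L / 2 * ‖d‖ ^ 2 * s ^ 2))
      (Set.Icc 0 1) := by
    refine antitoneOn_of_deriv_nonpos (convex_Icc 0 1)
      (fun t ht => (hderiv t ht).continuousAt.continuousWithinAt)
      (fun t ht => (hderiv t (interior_subset ht)).differentiableAt.differentiableWithinAt)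
      (fun t ht => ?_)
    have ht' := interior_subset ht
    rw [(hderiv t ht').deriv]
    have hcs := real_inner_le_norm (f' (v + t • d) - f' v) d
    have hlip := hsmooth _ (hmem t ht') v hv
    rw [add_sub_cancel_left, norm_smul, Real.norm_of_nonneg ht'.1] at hlip
    have := mul_le_mul_of_nonneg_right hlip (norm_nonneg d)
    rw [inner_sub_left] at hcs
    nlinarith
  have h01 := hanti (Set.left_mem_Icc.2 zero_le_one) (Set.right_mem_Icc.2 zero_le_one) zero_le_one
  have hvw : v + d = w := by rw [hd]; abel
  simp only [one_smul, zero_smul, add_zero, hvw] at h01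
  linarith

/-- The quadratic model built from an inexact gradient with error at most `δ` bounds the function
from above, after doubling the Lipschitz constant and adding `δ ^ 2 / (2 * L)`. -/
theorem le_quadratic_model_of_inexact_gradient [CompleteSpace E] {Q : Set E}
    (hQ : Convex ℝ Q) {f : E → ℝ} {f' : E → E} {L δ : ℝ} (hL : 0 < L)
    (hgrad : ∀ v ∈ Q, HasGradientAt f (f' v) v)
    (hsmooth : ∀ v ∈ Q, ∀ w ∈ Q, ‖f' v - f' w‖ ≤ L * ‖v - w‖)
    {v w g : E} (hv : v ∈ Q) (hw : w ∈ Q) (hg : ‖g - f' v‖ ≤ δ) :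
    f w ≤ f v + ⟪g, w - v⟫ + L * ‖w - v‖ ^ 2 + δ ^ 2 / (2 * L) := by
  have hdesc := le_quadratic_model_of_lipschitz_gradient hQ hgrad hsmooth hv hw
  have hcs := neg_le_of_abs_le (abs_real_inner_le_norm (g - f' v) (w - v))
  have hnoise := mul_le_mul_of_nonneg_right hg (norm_nonneg (w - v))
  have hyoung : δ * ‖w - v‖ ≤ L / 2 * ‖w - v‖ ^ 2 + δ ^ 2 / (2 * L) := by
    have hsq : L / 2 * ‖w - v‖ ^ 2 + δ ^ 2 / (2 * L) - δ * ‖w - v‖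
        = (L * ‖w - v‖ - δ) ^ 2 / (2 * L) := by
      field_simp
      ring
    have : 0 ≤ (L * ‖w - v‖ - δ) ^ 2 / (2 * L) := by positivity
    linarith
  rw [inner_sub_left] at hcs
  linarith

/-- Quadratic growth at a constrained minimizer of a function with isotropic Hessian `m`. -/
theorem quadratic_growth_of_forall_le {Q : Set E} (hQ : Convex ℝ Q) {φ : E → ℝ} {m c : ℝ} {b : E}
    (hφ : ∀ y, φ y = c + ⟪b, y⟫ + m / 2 * ‖y‖ ^ 2) {z : E} (hz : z ∈ Q)
    (hmin : ∀ y ∈ Q, φ z ≤ φ y) {y : E} (hy : y ∈ Q) :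
    φ z + m / 2 * ‖y - z‖ ^ 2 ≤ φ y := by
  set d := y - z with hd
  have hexp : ∀ t : ℝ, φ (z + t • d)
      = φ z + t * (⟪b, d⟫ + m * ⟪z, d⟫) + t ^ 2 * (m / 2 * ‖d‖ ^ 2) := by
    intro t
    rw [hφ, hφ, norm_add_sq_real, inner_add_right, inner_smul_right, inner_smul_right, norm_smul,
      mul_pow, Real.norm_eq_abs, sq_abs]
    ring
  have hzy : z + d = y := by rw [hd]; abel
  have hone := hexp 1
  rw [one_smul, hzy] at hone
  have hslope : 0 ≤ ⟪b, d⟫ + m * ⟪z, d⟫ := by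
    have hlim : Filter.Tendsto (fun t : ℝ => ⟪b, d⟫ + m * ⟪z, d⟫ + t * (m / 2 * ‖d‖ ^ 2))
        (nhdsWithin 0 (Set.Ioi 0)) (nhds (⟪b, d⟫ + m * ⟪z, d⟫)) := by
      refine (Continuous.tendsto' ?_ 0 _ (by simp)).mono_left nhdsWithin_le_nhds
      fun_prop
    refine ge_of_tendsto hlim ?_
    filter_upwards [Ioc_mem_nhdsGT (zero_lt_one : (0 : ℝ) < 1)] with t ht
    have h := hmin _ (hQ.add_smul_sub_mem hz hy ⟨ht.1.le, ht.2⟩)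
    rw [← hd, hexp] at h
    refine nonneg_of_mul_nonneg_right (a := t) ?_ ht.1
    linarith
  linarith

/-- Adding a scaled isotropic quadratic model to an isotropic quadratic function yields an
isotropic quadratic function. -/
theorem exists_isotropic_quadratic_add (m a μ c r : ℝ) (b g v : E) :
    ∃ (c' : ℝ) (b' : E), ∀ y : E,
      c + ⟪b, y⟫ + m / 2 * ‖y‖ ^ 2 + a * (r + ⟪g, y - v⟫ + μ / 2 * ‖y - v‖ ^ 2)
        = c' + ⟪b', y⟫ + (m + μ * a) / 2 * ‖y‖ ^ 2 := by
  refine ⟨c + a * (r - ⟪g, v⟫ + μ / 2 * ‖v‖ ^ 2), b + a • g - (a * μ) • v, fun y => ?_⟩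
  rw [norm_sub_sq_real, inner_sub_right, inner_sub_left, inner_add_left, real_inner_smul_left,
    real_inner_smul_left, real_inner_comm v y]
  ring

end Helpers

/-- Proposition 4.4: per-iterate estimate of STM (`τ = 1`, `μ_τ = μ`) under
absolute noise, with `L = 2 L_f`, `δ₁ = δ`, `δ₂ = δ²/(2 L_f)`. -/
theorem stmt_8 {n : ℕ} (Q : Set (EuclideanSpace ℝ (Fin n)))
    (hQclosed : IsClosed Q) (hQconvex : Convex ℝ Q)
    (f : EuclideanSpace ℝ (Fin n) → ℝ)
    (f' gt : EuclideanSpace ℝ (Fin n) → EuclideanSpace ℝ (Fin n))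
    (Lf μ δ : ℝ) (hLf : 0 < Lf) (hμ : 0 ≤ μ) (hδ : 0 ≤ δ)
    (hgrad : ∀ v ∈ Q, HasGradientAt f (f' v) v)
    (hsmooth : ∀ v ∈ Q, ∀ w ∈ Q, ‖f' v - f' w‖ ≤ Lf * ‖v - w‖)
    (hsc : ∀ v ∈ Q, ∀ w ∈ Q,
      f v + ⟪f' v, w - v⟫ + μ / 2 * ‖v - w‖ ^ 2 ≤ f w)
    (horacle : ∀ v ∈ Q, ‖gt v - f' v‖ ≤ δ)
    (α A : ℕ → ℝ) (xt x z : ℕ → EuclideanSpace ℝ (Fin n))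
    (ψ : ℕ → EuclideanSpace ℝ (Fin n) → ℝ)
    (hxt0 : xt 0 ∈ Q) (hα0 : α 0 = 1 / (2 * Lf)) (hA0 : A 0 = 1 / (2 * Lf))
    (hψ0 : ∀ y, ψ 0 y = 1 / 2 * ‖y - xt 0‖ ^ 2 +
      α 0 * (f (xt 0) + ⟪gt (xt 0), y - xt 0⟫ + μ / 2 * ‖y - xt 0‖ ^ 2))
    (hzmem : ∀ k, z k ∈ Q) (hzmin : ∀ k, ∀ y ∈ Q, ψ k (z k) ≤ ψ k y)
    (hx0 : x 0 = z 0)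
    (hαpos : ∀ k, 0 < α (k + 1))
    (hαeq : ∀ k, (1 + μ * A k) * (A k + α (k + 1)) = 2 * Lf * α (k + 1) ^ 2)
    (hA : ∀ k, A (k + 1) = A k + α (k + 1))
    (hxt : ∀ k, xt (k + 1) = (A (k + 1))⁻¹ • (A k • x k + α (k + 1) • z k))
    (hψ : ∀ k y, ψ (k + 1) y = ψ k y + α (k + 1) *
      (f (xt (k + 1)) + ⟪gt (xt (k + 1)), y - xt (k + 1)⟫ +
        μ / 2 * ‖y - xt (k + 1)‖ ^ 2))
    (hx : ∀ k, x (k + 1) = (A (k + 1))⁻¹ • (A k • x k + α (k + 1) • z (k + 1))) :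
    ∀ k : ℕ, A k * f (x k) ≤ ψ k (z k) +
      δ ^ 2 / (2 * Lf) * ∑ j ∈ Finset.range (k + 1), A j +
      δ * ∑ j ∈ Finset.range k, α (j + 1) * ‖xt (j + 1) - z j‖ := by
  have hApos : ∀ k, 0 < A k := by
    intro k
    induction k with
    | zero => rw [hA0]; positivity
    | succ k ih => rw [hA]; linarith [hαpos k]
  have havg : ∀ k, ∀ v ∈ Q, ∀ w ∈ Q,
      (A (k + 1))⁻¹ • (A k • v + α (k + 1) • w) ∈ Q := by
    intro k v hv w hw
    have hne := (hApos (k + 1)).ne'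
    have h := hQconvex hv hw
      (div_nonneg (hApos k).le (hApos (k + 1)).le)
      (div_nonneg (hαpos k).le (hApos (k + 1)).le)
      (by rw [← add_div, ← hA, div_self hne])
    convert h using 1
    rw [smul_add, smul_smul, smul_smul, div_eq_inv_mul, div_eq_inv_mul]
  have hxmem : ∀ k, x k ∈ Q := by
    intro k
    induction k with
    | zero => rw [hx0]; exact hzmem 0
    | succ k ih => rw [hx]; exact havg k _ ih _ (hzmem _)
  have hxtmem : ∀ k, xt (k + 1) ∈ Q := fun k => by
    rw [hxt]; exact havg k _ (hxmem k) _ (hzmem k)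
  have hquad : ∀ k, ∃ (c : ℝ) (b : EuclideanSpace ℝ (Fin n)), ∀ y,
      ψ k y = c + ⟪b, y⟫ + (1 + μ * A k) / 2 * ‖y‖ ^ 2 := by
    intro k
    induction k with
    | zero =>
      obtain ⟨c, b, h⟩ := exists_isotropic_quadratic_add 1 (α 0) μ (1 / 2 * ‖xt 0‖ ^ 2)
        (f (xt 0)) (-xt 0) (gt (xt 0)) (xt 0)
      refine ⟨c, b, fun y => ?_⟩
      rw [hA0, ← hα0, ← h, hψ0, norm_sub_sq_real y (xt 0), inner_neg_left,
        real_inner_comm (xt 0) y]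
      ring
    | succ k ih =>
      obtain ⟨c, b, h⟩ := ih
      obtain ⟨c', b', h'⟩ := exists_isotropic_quadratic_add (1 + μ * A k) (α (k + 1)) μ c
        (f (xt (k + 1))) b (gt (xt (k + 1))) (xt (k + 1))
      refine ⟨c', b', fun y => ?_⟩
      rw [hψ, h, h', hA]
      ring
  intro k
  induction k with
  | zero =>
    have hmodel := le_quadratic_model_of_inexact_gradient hQconvex hLf hgrad hsmooth hxt0
      (hzmem 0) (horacle _ hxt0)
    have hmul := mul_le_mul_of_nonneg_left hmodel (hApos 0).le
    have hAL : A 0 * Lf = 1 / 2 := by rw [hA0]; field_simp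
    have hμterm : 0 ≤ A 0 * (μ / 2 * ‖z 0 - xt 0‖ ^ 2) :=
      mul_nonneg (hApos 0).le (by positivity)
    rw [hx0, hψ0, hα0, ← hA0]
    simp only [zero_add, Finset.sum_range_one, Finset.range_zero, Finset.sum_empty, mul_zero,
      add_zero]
    linear_combination hmul + hμterm + ‖z 0 - xt 0‖ ^ 2 * hAL
  | succ k ih =>
    have hmodel := le_quadratic_model_of_inexact_gradient hQconvex hLf hgrad hsmooth (hxtmem k)
      (hxmem (k + 1)) (horacle _ (hxtmem k))
    have hmul := mul_le_mul_of_nonneg_left hmodel (hApos (k + 1)).le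
    obtain ⟨c, b, hφ⟩ := hquad k
    have hgrowth := quadratic_growth_of_forall_le hQconvex hφ (hzmem k) (hzmin k)
      (hzmem (k + 1))
    have hne := (hApos (k + 1)).ne'
    have hxtA : A (k + 1) • xt (k + 1) = A k • x k + α (k + 1) • z k := by
      rw [hxt, smul_inv_smul₀ hne]
    have hxA : A (k + 1) • x (k + 1) = A k • x k + α (k + 1) • z (k + 1) := by
      rw [hx, smul_inv_smul₀ hne]
    have hstep : A (k + 1) • (x (k + 1) - xt (k + 1)) = α (k + 1) • (z (k + 1) - z k) := by
      rw [smul_sub, hxtA, hxA, smul_sub]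
      abel
    have hsplit : A (k + 1) • (x (k + 1) - xt (k + 1))
        = A k • (x k - xt (k + 1)) + α (k + 1) • (z (k + 1) - xt (k + 1)) := by
      rw [smul_sub, hxA, hA]
      module
    have hback : A k • (x k - xt (k + 1)) = α (k + 1) • (xt (k + 1) - z k) := by
      have h := hxtA
      rw [hA, add_smul] at h
      rw [smul_sub, smul_sub, sub_eq_sub_iff_add_eq_add, ← h]
      abel
    have hinner : A (k + 1) * ⟪gt (xt (k + 1)), x (k + 1) - xt (k + 1)⟫
        = A k * ⟪gt (xt (k + 1)), x k - xt (k + 1)⟫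
          + α (k + 1) * ⟪gt (xt (k + 1)), z (k + 1) - xt (k + 1)⟫ := by
      rw [← inner_smul_right, ← inner_smul_right, ← inner_smul_right, ← inner_add_right, hsplit]
    have hnormsq : A (k + 1) * (Lf * ‖x (k + 1) - xt (k + 1)‖ ^ 2)
        = (1 + μ * A k) / 2 * ‖z (k + 1) - z k‖ ^ 2 := by
      have h := congrArg (fun v => ‖v‖ ^ 2) hstep
      simp only [norm_smul, mul_pow, Real.norm_eq_abs, sq_abs] at h
      have hα := hαeq k
      rw [← hA] at hα
      refine mul_left_cancel₀ hne ?_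
      linear_combination Lf * h - ‖z (k + 1) - z k‖ ^ 2 / 2 * hα
    have hnoise : A k * ⟪gt (xt (k + 1)) - f' (xt (k + 1)), x k - xt (k + 1)⟫
        ≤ δ * (α (k + 1) * ‖xt (k + 1) - z k‖) := by
      rw [← inner_smul_right, hback]
      refine (real_inner_le_norm _ _).trans ?_
      rw [norm_smul, Real.norm_of_nonneg (hαpos k).le]
      exact mul_le_mul_of_nonneg_right (horacle _ (hxtmem k))
        (mul_nonneg (hαpos k).le (norm_nonneg _))
    rw [inner_sub_left] at hnoise
    have hconv : f (xt (k + 1)) + ⟪f' (xt (k + 1)), x k - xt (k + 1)⟫ ≤ f (x k) := by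
      have := hsc _ (hxtmem k) _ (hxmem k)
      have : 0 ≤ μ / 2 * ‖xt (k + 1) - x k‖ ^ 2 := by positivity
      linarith
    have hconvA := mul_le_mul_of_nonneg_left hconv (hApos k).le
    have hμterm : 0 ≤ α (k + 1) * (μ / 2 * ‖z (k + 1) - xt (k + 1)‖ ^ 2) :=
      mul_nonneg (hαpos k).le (by positivity)
    rw [Finset.sum_range_succ A (k + 1),
      Finset.sum_range_succ (fun j => α (j + 1) * ‖xt (j + 1) - z j‖) k, hψ]
    linear_combination hmul + ih + hgrowth + hinner + hnormsq + hnoise + hconvA + hμterm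
      + f (xt (k + 1)) * hA k
end

section
/- If μ > 0, then for all k ≥ 0 the STM iterates with μ_τ = μ/2 (τ = 2) satisfy A_k f(x_k) ≤ ψ_k(z_k) + δ₂ Σ_{j=0}^{k} A_j + δ₃ Σ_{j=0}^{k−1} A_j, where δ₂ = δ²/(2L_f) and δ₃ = δ²/μ. -/
open scoped RealInnerProductSpace

section InnerProductSpace

variable {E : Type*} [NormedAddCommGroup E] [InnerProductSpace ℝ E]

/-- Descent lemma on a convex set. -/
theorem le_quadratic_of_lipschitz_gradient [CompleteSpace E] {Q : Set E} (hQ : Convex ℝ Q)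
    {f : E → ℝ} {f' : E → E} {K : ℝ} (hgrad : ∀ v ∈ Q, HasGradientAt f (f' v) v)
    (hsmooth : ∀ v ∈ Q, ∀ w ∈ Q, ‖f' v - f' w‖ ≤ K * ‖v - w‖) {v w : E}
    (hv : v ∈ Q) (hw : w ∈ Q) :
    f w ≤ f v + ⟪f' v, w - v⟫ + K / 2 * ‖w - v‖ ^ 2 := by
  have hmem : ∀ t ∈ Set.Icc (0 : ℝ) 1, v + t • (w - v) ∈ Q :=
    fun t ht => hQ.add_smul_sub_mem hv hw ht
  let φ : ℝ → ℝ := fun t =>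
    f (v + t • (w - v)) - t * ⟪f' v, w - v⟫ - K / 2 * ‖w - v‖ ^ 2 * t ^ 2
  have hφ : ∀ t ∈ Set.Icc (0 : ℝ) 1, HasDerivAt φ
      (⟪f' (v + t • (w - v)), w - v⟫ - ⟪f' v, w - v⟫ - K * ‖w - v‖ ^ 2 * t) t := by
    intro t ht
    have hline : HasDerivAt (fun s : ℝ => v + s • (w - v)) (w - v) t := by
      simpa using ((hasDerivAt_id t).smul_const (w - v)).const_add v
    have hf := (hgrad _ (hmem t ht)).hasFDerivAt.comp_hasDerivAt t hline
    have hd := (hf.sub ((hasDerivAt_id t).mul_const ⟪f' v, w - v⟫)).sub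
      ((hasDerivAt_pow 2 t).const_mul (K / 2 * ‖w - v‖ ^ 2))
    refine hd.congr_deriv ?_
    simp [InnerProductSpace.toDual_apply_apply]
    ring
  have hanti : AntitoneOn φ (Set.Icc 0 1) := by
    refine antitoneOn_of_hasDerivWithinAt_nonpos (convex_Icc 0 1)
      (fun t ht => (hφ t ht).continuousAt.continuousWithinAt)
      (fun t ht => (hφ t (interior_subset ht)).hasDerivWithinAt) fun t ht => ?_
    have ht' := interior_subset ht
    have hlip := hsmooth _ (hmem t ht') v hv
    rw [add_sub_cancel_left, norm_smul, Real.norm_of_nonneg ht'.1] at hlip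
    have hcs := real_inner_le_norm (f' (v + t • (w - v)) - f' v) (w - v)
    rw [inner_sub_left] at hcs
    nlinarith [mul_le_mul_of_nonneg_right hlip (norm_nonneg (w - v))]
  have h01 := hanti (by simp) (by simp) (zero_le_one' ℝ)
  simp only [φ, one_smul, zero_smul, add_sub_cancel, add_zero] at h01
  linarith

/-- Quadratic growth of `m / 2 * ‖y‖ ^ 2 + ⟪b, y⟫ + c` around its minimizer on a convex set. -/
theorem quadratic_growth_of_isMinOn {Q : Set E} (hQ : Convex ℝ Q) {h : E → ℝ} {m c : ℝ} {b : E}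
    (hh : ∀ y, h y = m / 2 * ‖y‖ ^ 2 + ⟪b, y⟫ + c) {w : E} (hw : w ∈ Q)
    (hmin : IsMinOn h Q w) {y : E} (hy : y ∈ Q) :
    h w + m / 2 * ‖y - w‖ ^ 2 ≤ h y := by
  have hexp : ∀ d : E, h (w + d) = h w + (m * ⟪w, d⟫ + ⟪b, d⟫) + m / 2 * ‖d‖ ^ 2 := by
    intro d
    rw [hh, hh, norm_add_sq_real, inner_add_right]
    ring
  set D := y - w with hD
  have hstep : ∀ t ∈ Set.Ioc (0 : ℝ) 1,
      0 ≤ (m * ⟪w, D⟫ + ⟪b, D⟫) + t * (m / 2 * ‖D‖ ^ 2) := by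
    intro t ht
    have h1 := isMinOn_iff.1 hmin _ (hQ.add_smul_sub_mem hw hy ⟨ht.1.le, ht.2⟩)
    rw [← hD, hexp, inner_smul_right, inner_smul_right, norm_smul, mul_pow, Real.norm_eq_abs,
      sq_abs] at h1
    refine nonneg_of_mul_nonneg_right (a := t) ?_ ht.1
    linarith
  have hfirst : 0 ≤ m * ⟪w, D⟫ + ⟪b, D⟫ := by
    have hlim : Filter.Tendsto
        (fun t : ℝ => (m * ⟪w, D⟫ + ⟪b, D⟫) + t * (m / 2 * ‖D‖ ^ 2))
        (nhdsWithin 0 (Set.Ioi 0)) (nhds (m * ⟪w, D⟫ + ⟪b, D⟫)) := by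
      have hc : Continuous
          (fun t : ℝ => (m * ⟪w, D⟫ + ⟪b, D⟫) + t * (m / 2 * ‖D‖ ^ 2)) := by fun_prop
      simpa using (hc.tendsto 0).mono_left nhdsWithin_le_nhds
    exact ge_of_tendsto hlim
      (Filter.eventually_of_mem (Ioc_mem_nhdsGT zero_lt_one) hstep)
  have hyw := hexp D
  rw [hD, add_sub_cancel] at hyw
  linarith

/-- Upper quadratic model with an inexact gradient `g`. -/
theorem le_inexact_model {fw fv K δ : ℝ} (hK : 0 < K) {p g d : E}
    (hpg : ‖g - p‖ ≤ δ) (h : fw ≤ fv + ⟪p, d⟫ + K / 2 * ‖d‖ ^ 2) :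
    fw ≤ fv + ⟪g, d⟫ + K * ‖d‖ ^ 2 + δ ^ 2 / (2 * K) := by
  have hcs := (abs_le.1 (abs_real_inner_le_norm (g - p) d)).1
  rw [inner_sub_left] at hcs
  have hδd := mul_le_mul_of_nonneg_right hpg (norm_nonneg d)
  have hyoung : δ * ‖d‖ ≤ K / 2 * ‖d‖ ^ 2 + δ ^ 2 / (2 * K) := by
    have : K / 2 * ‖d‖ ^ 2 + δ ^ 2 / (2 * K) - δ * ‖d‖ = (K * ‖d‖ - δ) ^ 2 / (2 * K) := by
      field_simp
      ring
    have : 0 ≤ (K * ‖d‖ - δ) ^ 2 / (2 * K) := by positivity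
    linarith
  linarith

/-- Lower linear model of a strongly convex function with an inexact gradient `g`. -/
theorem inexact_model_le {fw fv μ δ : ℝ} (hμ : 0 < μ) {p g d : E}
    (hpg : ‖g - p‖ ≤ δ) (h : fv + ⟪p, d⟫ + μ / 2 * ‖d‖ ^ 2 ≤ fw) :
    fv + ⟪g, d⟫ - δ ^ 2 / μ ≤ fw := by
  have hcs := real_inner_le_norm (g - p) d
  rw [inner_sub_left] at hcs
  have hδd := mul_le_mul_of_nonneg_right hpg (norm_nonneg d)
  have hyoung : δ * ‖d‖ ≤ μ / 4 * ‖d‖ ^ 2 + δ ^ 2 / μ := by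
    have : μ / 4 * ‖d‖ ^ 2 + δ ^ 2 / μ - δ * ‖d‖ = (μ * ‖d‖ - 2 * δ) ^ 2 / (4 * μ) := by
      field_simp
      ring
    have : 0 ≤ (μ * ‖d‖ - 2 * δ) ^ 2 / (4 * μ) := by positivity
    linarith
  have : 0 ≤ μ * ‖d‖ ^ 2 := by positivity
  linarith

end InnerProductSpace

/-- Proposition 4.5: per-iterate estimate of STM (`τ = 2`, `μ_τ = μ/2`) under
absolute noise, with `L = 2 L_f`, `δ₂ = δ²/(2 L_f)`, `δ₃ = δ²/μ`. -/
theorem stmt_9 {n : ℕ} (Q : Set (EuclideanSpace ℝ (Fin n)))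
    (hQclosed : IsClosed Q) (hQconvex : Convex ℝ Q)
    (f : EuclideanSpace ℝ (Fin n) → ℝ)
    (f' gt : EuclideanSpace ℝ (Fin n) → EuclideanSpace ℝ (Fin n))
    (Lf μ δ : ℝ) (hLf : 0 < Lf) (hμ : 0 < μ) (hδ : 0 ≤ δ)
    (hgrad : ∀ v ∈ Q, HasGradientAt f (f' v) v)
    (hsmooth : ∀ v ∈ Q, ∀ w ∈ Q, ‖f' v - f' w‖ ≤ Lf * ‖v - w‖)
    (hsc : ∀ v ∈ Q, ∀ w ∈ Q,
      f v + ⟪f' v, w - v⟫ + μ / 2 * ‖v - w‖ ^ 2 ≤ f w)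
    (horacle : ∀ v ∈ Q, ‖gt v - f' v‖ ≤ δ)
    (α A : ℕ → ℝ) (xt x z : ℕ → EuclideanSpace ℝ (Fin n))
    (ψ : ℕ → EuclideanSpace ℝ (Fin n) → ℝ)
    (hxt0 : xt 0 ∈ Q) (hα0 : α 0 = 1 / (2 * Lf)) (hA0 : A 0 = 1 / (2 * Lf))
    (hψ0 : ∀ y, ψ 0 y = 1 / 2 * ‖y - xt 0‖ ^ 2 +
      α 0 * (f (xt 0) + ⟪gt (xt 0), y - xt 0⟫ + μ / 2 / 2 * ‖y - xt 0‖ ^ 2))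
    (hzmem : ∀ k, z k ∈ Q) (hzmin : ∀ k, ∀ y ∈ Q, ψ k (z k) ≤ ψ k y)
    (hx0 : x 0 = z 0)
    (hαpos : ∀ k, 0 < α (k + 1))
    (hαeq : ∀ k, (1 + μ / 2 * A k) * (A k + α (k + 1)) = 2 * Lf * α (k + 1) ^ 2)
    (hA : ∀ k, A (k + 1) = A k + α (k + 1))
    (hxt : ∀ k, xt (k + 1) = (A (k + 1))⁻¹ • (A k • x k + α (k + 1) • z k))
    (hψ : ∀ k y, ψ (k + 1) y = ψ k y + α (k + 1) *
      (f (xt (k + 1)) + ⟪gt (xt (k + 1)), y - xt (k + 1)⟫ +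
        μ / 2 / 2 * ‖y - xt (k + 1)‖ ^ 2))
    (hx : ∀ k, x (k + 1) = (A (k + 1))⁻¹ • (A k • x k + α (k + 1) • z (k + 1))) :
    ∀ k : ℕ, A k * f (x k) ≤ ψ k (z k) +
      δ ^ 2 / (2 * Lf) * ∑ j ∈ Finset.range (k + 1), A j +
      δ ^ 2 / μ * ∑ j ∈ Finset.range k, A j := by
  have hApos : ∀ k, 0 < A k := by
    intro k
    induction k with
    | zero => rw [hA0]; positivity
    | succ k ih => rw [hA]; linarith [hαpos k]
  have hcomb : ∀ k, ∀ v ∈ Q, ∀ w ∈ Q,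
      (A (k + 1))⁻¹ • (A k • v + α (k + 1) • w) ∈ Q := by
    intro k v hv w hw
    have hA1 := hApos (k + 1)
    rw [smul_add, smul_smul, smul_smul]
    refine hQconvex hv hw (mul_pos (inv_pos.2 hA1) (hApos k)).le
      (mul_pos (inv_pos.2 hA1) (hαpos k)).le ?_
    rw [← mul_add, ← hA, inv_mul_cancel₀ hA1.ne']
  have hxmem : ∀ k, x k ∈ Q := by
    intro k
    induction k with
    | zero => rw [hx0]; exact hzmem 0
    | succ k ih => rw [hx]; exact hcomb k _ ih _ (hzmem _)
  have hquad : ∀ k, ∃ (b : EuclideanSpace ℝ (Fin n)) (c : ℝ),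
      ∀ y, ψ k y = (1 + μ / 2 * A k) / 2 * ‖y‖ ^ 2 + ⟪b, y⟫ + c := by
    intro k
    induction k with
    | zero =>
      refine ⟨α 0 • gt (xt 0) - (1 + μ / 2 * A 0) • xt 0,
        (1 + μ / 2 * A 0) / 2 * ‖xt 0‖ ^ 2 + α 0 * (f (xt 0) - ⟪gt (xt 0), xt 0⟫), fun y => ?_⟩
      rw [hψ0, norm_sub_sq_real, inner_sub_right, inner_sub_left, real_inner_smul_left,
        real_inner_smul_left, real_inner_comm (xt 0) y, hA0, hα0]
      ring
    | succ k ih =>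
      obtain ⟨b, c, hbc⟩ := ih
      set u := xt (k + 1)
      refine ⟨b + α (k + 1) • (gt u - (μ / 2) • u),
        c + α (k + 1) * (f u - ⟪gt u, u⟫ + μ / 2 / 2 * ‖u‖ ^ 2), fun y => ?_⟩
      rw [hψ, hbc, norm_sub_sq_real, inner_sub_right, inner_add_left, real_inner_smul_left,
        inner_sub_left, real_inner_smul_left, real_inner_comm u y, hA]
      ring
  have hupper : ∀ v ∈ Q, ∀ w ∈ Q,
      f w ≤ f v + ⟪gt v, w - v⟫ + Lf * ‖w - v‖ ^ 2 + δ ^ 2 / (2 * Lf) := fun v hv w hw =>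
    le_inexact_model hLf (horacle v hv)
      (le_quadratic_of_lipschitz_gradient hQconvex hgrad hsmooth hv hw)
  have hlower : ∀ v ∈ Q, ∀ w ∈ Q, f v + ⟪gt v, w - v⟫ - δ ^ 2 / μ ≤ f w := fun v hv w hw =>
    inexact_model_le hμ (horacle v hv) (norm_sub_rev v w ▸ hsc v hv w hw)
  intro k
  induction k with
  | zero =>
    have h := mul_le_mul_of_nonneg_left (hupper _ hxt0 _ (hzmem 0)) (hApos 0).le
    have hALf : A 0 * Lf = 1 / 2 := by rw [hA0]; field_simp
    have hpos : 0 ≤ A 0 * (μ / 2 / 2 * ‖z 0 - xt 0‖ ^ 2) := by have := hApos 0; positivity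
    rw [hx0, hψ0, hα0, ← hA0]
    simp only [zero_add, Finset.sum_range_one, Finset.range_zero, Finset.sum_empty, mul_zero,
      add_zero]
    linear_combination h + hpos + ‖z 0 - xt 0‖ ^ 2 * hALf
  | succ k ih =>
    obtain ⟨b, c, hbc⟩ := hquad k
    have hA1 := hApos (k + 1)
    have hutmem : xt (k + 1) ∈ Q := by rw [hxt]; exact hcomb k _ (hxmem k) _ (hzmem k)
    have hgrow := quadratic_growth_of_isMinOn hQconvex hbc (hzmem k)
      (isMinOn_iff.2 (hzmin k)) (hzmem (k + 1))
    have hup := mul_le_mul_of_nonneg_left (hupper _ hutmem _ (hxmem (k + 1))) hA1.le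
    have hlo := mul_le_mul_of_nonneg_left (hlower _ hutmem _ (hxmem k)) (hApos k).le
    have hxA : A (k + 1) • x (k + 1) = A k • x k + α (k + 1) • z (k + 1) := by
      rw [hx, smul_inv_smul₀ hA1.ne']
    have hxtA : A (k + 1) • xt (k + 1) = A k • x k + α (k + 1) • z k := by
      rw [hxt, smul_inv_smul₀ hA1.ne']
    have hdiff : A (k + 1) • (x (k + 1) - xt (k + 1)) = α (k + 1) • (z (k + 1) - z k) := by
      rw [smul_sub, hxA, hxtA, smul_sub]
      abel
    have hinner : A (k + 1) * ⟪gt (xt (k + 1)), x (k + 1) - xt (k + 1)⟫ =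
        A k * ⟪gt (xt (k + 1)), x k - xt (k + 1)⟫ +
          α (k + 1) * ⟪gt (xt (k + 1)), z (k + 1) - xt (k + 1)⟫ := by
      rw [← real_inner_smul_right, ← real_inner_smul_right, ← real_inner_smul_right,
        ← inner_add_right, smul_sub, hxA, hA]
      congr 1
      module
    have hnorm : A (k + 1) ^ 2 * ‖x (k + 1) - xt (k + 1)‖ ^ 2 =
        α (k + 1) ^ 2 * ‖z (k + 1) - z k‖ ^ 2 := by
      have h := congrArg (fun v => ‖v‖ ^ 2) hdiff
      simpa only [norm_smul, mul_pow, Real.norm_eq_abs, sq_abs] using h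
    have hmatch : A (k + 1) * (Lf * ‖x (k + 1) - xt (k + 1)‖ ^ 2) =
        (1 + μ / 2 * A k) / 2 * ‖z (k + 1) - z k‖ ^ 2 := by
      have hα := hαeq k
      rw [← hA] at hα
      refine mul_left_cancel₀ hA1.ne' ?_
      linear_combination Lf * hnorm - ‖z (k + 1) - z k‖ ^ 2 / 2 * hα
    have hpos : 0 ≤ α (k + 1) * (μ / 2 / 2 * ‖z (k + 1) - xt (k + 1)‖ ^ 2) := by
      have := hαpos k
      positivity
    rw [Finset.sum_range_succ _ k] at ih
    rw [hψ, Finset.sum_range_succ _ (k + 1), Finset.sum_range_succ _ k]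
    have hAf : A (k + 1) * f (xt (k + 1)) = A k * f (xt (k + 1)) + α (k + 1) * f (xt (k + 1)) := by
      rw [hA, add_mul]
    linear_combination hup + hlo + ih + hgrow + hpos + hinner + hmatch + hAf
end

section
/- If the oracle error satisfies δ = 0 (i.e. g̃ = ∇f on Q) and ‖x̃₀ − x*‖₂ ≤ R, then the STM iterates remain in the ball of radius R around x*: for all k ≥ 0, ‖z_k − x*‖₂ ≤ R, ‖x_k − x*‖₂ ≤ R, and ‖x̃_k − x*‖₂ ≤ R, i.e. R̃_k ≤ R. -/
open scoped RealInnerProductSpace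

section Auxiliary

variable {E : Type*} [NormedAddCommGroup E] [InnerProductSpace ℝ E]

/-- The strong convexity inequality with modulus `m`, holding with equality for quadratics. -/
def IsQuadraticOfModulus (m : ℝ) (q : E → ℝ) : Prop :=
  ∀ (u v : E) (t : ℝ), q (u + t • (v - u)) =
    (1 - t) * q u + t * q v - m / 2 * t * (1 - t) * ‖v - u‖ ^ 2

theorem isQuadraticOfModulus_model (c m : ℝ) (g w : E) :
    IsQuadraticOfModulus m fun y => c + ⟪g, y - w⟫ + m / 2 * ‖y - w‖ ^ 2 := by
  intro u v t
  have hu : u + t • (v - u) - w = (u - w) + t • (v - u) := by abel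
  have hv : v - w = (u - w) + (v - u) := by abel
  simp only [hu, hv, norm_add_sq_real, inner_add_right, inner_smul_right, norm_smul, mul_pow,
    Real.norm_eq_abs, sq_abs]
  ring

theorem IsQuadraticOfModulus.add_mul {m m' a : ℝ} {p q : E → ℝ}
    (hp : IsQuadraticOfModulus m p) (hq : IsQuadraticOfModulus m' q) :
    IsQuadraticOfModulus (m + m' * a) fun y => p y + a * q y := by
  intro u v t
  simp only [hp u v t, hq u v t]
  ring

/-- Quadratic growth away from a constrained minimizer. -/
theorem IsQuadraticOfModulus.growth {m : ℝ} {q : E → ℝ} (hq : IsQuadraticOfModulus m q)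
    {Q : Set E} (hQ : Convex ℝ Q) {u : E} (hu : u ∈ Q) (hmin : ∀ y ∈ Q, q u ≤ q y)
    {v : E} (hv : v ∈ Q) : q u + m / 2 * ‖v - u‖ ^ 2 ≤ q v := by
  set d : ℝ := m / 2 * ‖v - u‖ ^ 2 with hd
  have key : ∀ t : ℝ, 0 < t → t ≤ 1 → q u + (1 - t) * d ≤ q v := by
    intro t ht ht1
    have h := hmin _ (hQ.add_smul_sub_mem hu hv ⟨ht.le, ht1⟩)
    rw [hq u v t] at h
    have h2 : 0 ≤ t * (q v - q u - (1 - t) * d) := by rw [hd]; linarith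
    have := nonneg_of_mul_nonneg_right h2 ht
    linarith
  have hlim : Filter.Tendsto (fun t : ℝ => q u + (1 - t) * d) (nhdsWithin 0 (Set.Ioi 0))
      (nhds (q u + d)) := by
    have hc : Continuous fun t : ℝ => q u + (1 - t) * d := by fun_prop
    simpa using (hc.tendsto 0).mono_left nhdsWithin_le_nhds
  refine le_of_tendsto hlim ?_
  filter_upwards [Ioc_mem_nhdsGT (zero_lt_one (α := ℝ))] with t ht using key t ht.1 ht.2

theorem Convex.inv_smul_add_mem {S : Set E} (hS : Convex ℝ S) {a b : ℝ} (ha : 0 < a) (hb : 0 < b)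
    {u v : E} (hu : u ∈ S) (hv : v ∈ S) : (a + b)⁻¹ • (a • u + b • v) ∈ S := by
  rw [smul_add, smul_smul, smul_smul]
  have h : 0 < a + b := by positivity
  refine hS hu hv (by positivity) (by positivity) ?_
  field_simp

/-- A weak descent inequality, from the first-order convexity inequality and a Lipschitz
gradient. -/
theorem le_linearization_add_of_lipschitz {f : E → ℝ} {f' : E → E} {K : ℝ} {v w : E}
    (hconv : f w + ⟪f' w, v - w⟫ ≤ f v) (hlip : ‖f' w - f' v‖ ≤ K * ‖w - v‖) :
    f w ≤ f v + ⟪f' v, w - v⟫ + K * ‖w - v‖ ^ 2 := by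
  have h1 : ⟪f' w - f' v, w - v⟫ ≤ K * ‖w - v‖ * ‖w - v‖ :=
    (real_inner_le_norm _ _).trans (mul_le_mul_of_nonneg_right hlip (norm_nonneg _))
  have h2 : ⟪f' w, v - w⟫ = -⟪f' w, w - v⟫ := by rw [← neg_sub, inner_neg_right]
  rw [inner_sub_left] at h1
  linarith

/-- One step of the estimating sequence argument, with `x⁺` and `x̃` the convex combinations of
`x` with `z⁺` and `z`. -/
theorem mul_le_estimate_step {f : E → ℝ} {A α K M p : ℝ} {x z z' xt x' g : E}
    (hA : 0 < A) (hα : 0 < α) (heq : M * (A + α) = 2 * K * α ^ 2)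
    (hxt : xt = (A + α)⁻¹ • (A • x + α • z)) (hx' : x' = (A + α)⁻¹ • (A • x + α • z'))
    (hdesc : f x' ≤ f xt + ⟪g, x' - xt⟫ + K * ‖x' - xt‖ ^ 2)
    (hconv : f xt + ⟪g, x - xt⟫ ≤ f x) (hp : A * f x ≤ p) :
    (A + α) * f x' ≤ p + M / 2 * ‖z' - z‖ ^ 2 + α * (f xt + ⟪g, z' - xt⟫) := by
  have hB : 0 < A + α := by positivity
  have hdiff : x' - xt = (α / (A + α)) • (z' - z) := by
    rw [hx', hxt, ← smul_sub, add_sub_add_left_eq_sub, ← smul_sub, smul_smul]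
    congr 1
    ring
  have hnorm : (A + α) * (K * ‖x' - xt‖ ^ 2) = M / 2 * ‖z' - z‖ ^ 2 := by
    rw [hdiff, norm_smul, mul_pow, Real.norm_eq_abs, sq_abs]
    have hM : M = 2 * K * α ^ 2 / (A + α) := by rw [eq_div_iff hB.ne', heq]
    rw [hM]
    field_simp
  have hinner : (A + α) * ⟪g, x' - xt⟫ = A * ⟪g, x - xt⟫ + α * ⟪g, z' - xt⟫ := by
    rw [← inner_smul_right, ← inner_smul_right, ← inner_smul_right, ← inner_add_right]
    congr 1
    rw [smul_sub, hx', smul_smul, mul_inv_cancel₀ hB.ne', one_smul]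
    module
  have h1 := mul_le_mul_of_nonneg_left hdesc hB.le
  have h2 := mul_le_mul_of_nonneg_left hconv hA.le
  linarith

end Auxiliary

/-- Proposition 4.6: with exact gradients (`δ = 0`, `g̃ = ∇f`) the STM trajectory
stays in the ball of radius `R` around the solution `x*`. -/
theorem stmt_10 {n : ℕ} (Q : Set (EuclideanSpace ℝ (Fin n)))
    (hQclosed : IsClosed Q) (hQconvex : Convex ℝ Q)
    (f : EuclideanSpace ℝ (Fin n) → ℝ)
    (f' : EuclideanSpace ℝ (Fin n) → EuclideanSpace ℝ (Fin n))
    (Lf μ μτ R : ℝ) (hLf : 0 < Lf) (hμ : 0 ≤ μ)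
    (hμτ : μτ = μ ∨ μτ = μ / 2)
    (hgrad : ∀ v ∈ Q, HasGradientAt f (f' v) v)
    (hsmooth : ∀ v ∈ Q, ∀ w ∈ Q, ‖f' v - f' w‖ ≤ Lf * ‖v - w‖)
    (hsc : ∀ v ∈ Q, ∀ w ∈ Q,
      f v + ⟪f' v, w - v⟫ + μ / 2 * ‖v - w‖ ^ 2 ≤ f w)
    (xstar : EuclideanSpace ℝ (Fin n)) (hxstarQ : xstar ∈ Q)
    (hxstar : ∀ y ∈ Q, f xstar ≤ f y)
    (α A : ℕ → ℝ) (xt x z : ℕ → EuclideanSpace ℝ (Fin n))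
    (ψ : ℕ → EuclideanSpace ℝ (Fin n) → ℝ)
    (hxt0 : xt 0 ∈ Q) (hR : ‖xt 0 - xstar‖ ≤ R)
    (hα0 : α 0 = 1 / (2 * Lf)) (hA0 : A 0 = 1 / (2 * Lf))
    (hψ0 : ∀ y, ψ 0 y = 1 / 2 * ‖y - xt 0‖ ^ 2 +
      α 0 * (f (xt 0) + ⟪f' (xt 0), y - xt 0⟫ + μτ / 2 * ‖y - xt 0‖ ^ 2))
    (hzmem : ∀ k, z k ∈ Q) (hzmin : ∀ k, ∀ y ∈ Q, ψ k (z k) ≤ ψ k y)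
    (hx0 : x 0 = z 0)
    (hαpos : ∀ k, 0 < α (k + 1))
    (hαeq : ∀ k, (1 + μτ * A k) * (A k + α (k + 1)) = 2 * Lf * α (k + 1) ^ 2)
    (hA : ∀ k, A (k + 1) = A k + α (k + 1))
    (hxt : ∀ k, xt (k + 1) = (A (k + 1))⁻¹ • (A k • x k + α (k + 1) • z k))
    (hψ : ∀ k y, ψ (k + 1) y = ψ k y + α (k + 1) *
      (f (xt (k + 1)) + ⟪f' (xt (k + 1)), y - xt (k + 1)⟫ +
        μτ / 2 * ‖y - xt (k + 1)‖ ^ 2))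
    (hx : ∀ k, x (k + 1) = (A (k + 1))⁻¹ • (A k • x k + α (k + 1) • z (k + 1))) :
    ∀ k : ℕ, ‖z k - xstar‖ ≤ R ∧ ‖x k - xstar‖ ≤ R ∧ ‖xt k - xstar‖ ≤ R := by
  have hμτ0 : 0 ≤ μτ := by rcases hμτ with h | h <;> linarith
  have hμτμ : μτ ≤ μ := by rcases hμτ with h | h <;> linarith
  have hApos : ∀ k, 0 < A k := by
    intro k
    induction k with
    | zero => rw [hA0]; positivity
    | succ k ih => rw [hA]; linarith [hαpos k]
  have hcomb : ∀ S : Set (EuclideanSpace ℝ (Fin n)), Convex ℝ S → (∀ k, z k ∈ S) → xt 0 ∈ S →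
      ∀ k, x k ∈ S ∧ xt k ∈ S := by
    intro S hS hz h0 k
    induction k with
    | zero => exact ⟨hx0 ▸ hz 0, h0⟩
    | succ k ih =>
      rw [hx, hxt, hA]
      exact ⟨hS.inv_smul_add_mem (hApos k) (hαpos k) ih.1 (hz _),
        hS.inv_smul_add_mem (hApos k) (hαpos k) ih.1 (hz _)⟩
  have hQmem := hcomb Q hQconvex hzmem hxt0
  have hconv : ∀ v ∈ Q, ∀ w ∈ Q, f v + ⟪f' v, w - v⟫ ≤ f w := fun v hv w hw =>
    (le_add_of_nonneg_right (by positivity)).trans (hsc v hv w hw)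
  have hdesc : ∀ v ∈ Q, ∀ w ∈ Q, f w ≤ f v + ⟪f' v, w - v⟫ + Lf * ‖w - v‖ ^ 2 :=
    fun v hv w hw => le_linearization_add_of_lipschitz (hconv w hw v hv) (hsmooth w hw v hv)
  have hquad : ∀ k, IsQuadraticOfModulus (1 + μτ * A k) (ψ k) := by
    intro k
    induction k with
    | zero =>
      have h := (isQuadraticOfModulus_model 0 1 0 (xt 0)).add_mul (a := α 0)
        (isQuadraticOfModulus_model (f (xt 0)) μτ (f' (xt 0)) (xt 0))
      rw [hA0, ← hα0, funext hψ0]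
      simpa using h
    | succ k ih =>
      have h := ih.add_mul (a := α (k + 1))
        (isQuadraticOfModulus_model (f (xt (k + 1))) μτ (f' (xt (k + 1))) (xt (k + 1)))
      rw [hA, mul_add, ← add_assoc, funext (hψ k)]
      exact h
  have hgrowth : ∀ k, ∀ y ∈ Q, ψ k (z k) + (1 + μτ * A k) / 2 * ‖y - z k‖ ^ 2 ≤ ψ k y :=
    fun k y hy => (hquad k).growth hQconvex (hzmem k) (hzmin k) hy
  have hupper : ∀ k, ψ k xstar ≤ 1 / 2 * ‖xstar - xt 0‖ ^ 2 + A k * f xstar := by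
    have hmodel : ∀ v ∈ Q,
        f v + ⟪f' v, xstar - v⟫ + μτ / 2 * ‖xstar - v‖ ^ 2 ≤ f xstar := by
      intro v hv
      have h := hsc v hv xstar hxstarQ
      rw [norm_sub_rev v] at h
      nlinarith [sq_nonneg ‖xstar - v‖]
    intro k
    induction k with
    | zero =>
      rw [hψ0, hA0, ← hα0]
      have hα0' : 0 ≤ α 0 := by rw [hα0]; positivity
      linarith [mul_le_mul_of_nonneg_left (hmodel _ hxt0) hα0']
    | succ k ih =>
      rw [hψ, hA]
      linarith [mul_le_mul_of_nonneg_left (hmodel _ (hQmem (k + 1)).2) (hαpos k).le]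
  have hlower : ∀ k, A k * f (x k) ≤ ψ k (z k) := by
    intro k
    induction k with
    | zero =>
      have hα0' : 0 < α 0 := by rw [hα0]; positivity
      have h := mul_le_mul_of_nonneg_left (hdesc _ hxt0 _ (hzmem 0)) hα0'.le
      have h1 : α 0 * (Lf * ‖z 0 - xt 0‖ ^ 2) = 1 / 2 * ‖z 0 - xt 0‖ ^ 2 := by
        rw [hα0]; field_simp
      have h2 : 0 ≤ α 0 * (μτ / 2 * ‖z 0 - xt 0‖ ^ 2) := by positivity
      rw [hψ0, hx0, hA0, ← hα0]
      linarith
    | succ k ih =>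
      have hstep := mul_le_estimate_step (f := f) (hApos k) (hαpos k) (hαeq k)
        (by rw [hxt, hA]) (by rw [hx, hA])
        (hdesc _ (hQmem (k + 1)).2 _ (hQmem (k + 1)).1)
        (hconv _ (hQmem (k + 1)).2 _ (hQmem k).1) ih
      have hg := hgrowth k _ (hzmem (k + 1))
      have h2 : 0 ≤ α (k + 1) * (μτ / 2 * ‖z (k + 1) - xt (k + 1)‖ ^ 2) := by
        have := hαpos k
        positivity
      rw [hψ, hA]
      linarith
  have hz : ∀ k, z k ∈ Metric.closedBall xstar R := by
    intro k
    rw [mem_closedBall_iff_norm]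
    refine le_trans ?_ hR
    refine le_of_sq_le_sq ?_ (norm_nonneg _)
    have h1 := hgrowth k xstar hxstarQ
    have h2 := mul_le_mul_of_nonneg_left (hxstar _ (hQmem k).1) (hApos k).le
    have h3 : 0 ≤ μτ * A k * ‖xstar - z k‖ ^ 2 :=
      mul_nonneg (mul_nonneg hμτ0 (hApos k).le) (sq_nonneg _)
    rw [norm_sub_rev (z k), norm_sub_rev (xt 0)]
    linarith [hupper k, hlower k]
  have hball := hcomb _ (convex_closedBall xstar R) hz (mem_closedBall_iff_norm.2 hR)
  exact fun k => ⟨mem_closedBall_iff_norm.1 (hz k), mem_closedBall_iff_norm.1 (hball k).1,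
    mem_closedBall_iff_norm.1 (hball k).2⟩
end

section
/- Let λ ≥ 0, θ ≥ 0, let {A_k}_{k≥0} be a sequence of positive reals, and let {Δ_k}_{k≥0} be a sequence of nonnegative reals satisfying Δ_N ≤ λ/A_N + θ Σ_{k=0}^{N−1} (A_k/A_N) Δ_k for all N ≥ 1. Then for all k ≥ 1, Δ_k ≤ (1 + θ)^{k−1} λ / A_k + θ A₀ (1 + θ)^{k−1} Δ₀ / A_k. -/
/-- A discrete Grönwall inequality for partial sums. -/
theorem add_mul_sum_range_succ_le_pow_mul {c θ : ℝ} (hθ : 0 ≤ θ) {a : ℕ → ℝ}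
    (ha : ∀ n, a (n + 1) ≤ c + θ * ∑ k ∈ Finset.range (n + 1), a k) (n : ℕ) :
    c + θ * ∑ k ∈ Finset.range (n + 1), a k ≤ (1 + θ) ^ n * (c + θ * a 0) := by
  induction n with
  | zero => simp
  | succ n ih =>
    rw [Finset.sum_range_succ, pow_succ]
    have step := mul_le_mul_of_nonneg_left (ha n) hθ
    have bound := mul_le_mul_of_nonneg_left ih (by linarith : 0 ≤ 1 + θ)
    linarith

/-- Claim 5.1: solution of the error-accumulation recurrence. -/
theorem stmt_15 (lam θ : ℝ) (hlam : 0 ≤ lam) (hθ : 0 ≤ θ)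
    (A Δ : ℕ → ℝ) (hA : ∀ k, 0 < A k) (hΔ : ∀ k, 0 ≤ Δ k)
    (hrec : ∀ N : ℕ, 1 ≤ N →
      Δ N ≤ lam / A N + θ * ∑ k ∈ Finset.range N, A k / A N * Δ k) :
    ∀ k : ℕ, 1 ≤ k →
      Δ k ≤ (1 + θ) ^ (k - 1) / A k * lam +
        θ * (A 0 * (1 + θ) ^ (k - 1)) / A k * Δ 0 := by
  have scaled : ∀ n, A (n + 1) * Δ (n + 1) ≤
      lam + θ * ∑ k ∈ Finset.range (n + 1), A k * Δ k := by
    intro n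
    have h := hrec (n + 1) (Nat.le_add_left 1 n)
    simp only [div_mul_eq_mul_div, ← Finset.sum_div] at h
    rwa [← mul_div_assoc, ← add_div, le_div_iff₀' (hA _)] at h
  intro k hk
  obtain ⟨n, rfl⟩ := Nat.exists_eq_add_of_le' hk
  have h := (scaled n).trans (add_mul_sum_range_succ_le_pow_mul hθ scaled n)
  rw [← le_div_iff₀' (hA _)] at h
  refine h.trans_eq ?_
  rw [Nat.add_sub_cancel]
  ring
end
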